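/- There exist universal constants C' ≥ 1 and 0 < c' ≤ 1 such that: for every hypothesis class H ⊆ [−1,1]^X, every γ > 0 and every α > 0, the fat-shattering dimension of the truncated convex hull satisfies fat_α(Conv(H)_{⌈γ⌉}) ≤ C'·fat_{c'α}(H)/α². -/

import Mathlib

open MeasureTheory Real
open scoped ENNReal NNReal

noncomputable section

namespace Agb

/-- signed value of a boolean label: `true ↦ 1`, `false ↦ -1`. -/
def bval (b : Bool) : ℝ := if b then 1 else -1

variable {X : Type*}

/-- a hypothesis is binary (±1-valued) -/
def IsBinary (h : X → ℝ) : Prop := ∀ x, h x = 1 ∨ h x = -1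

/-- correlation of a hypothesis under a distribution on `X × Bool` -/
def corr [MeasurableSpace X] (D : Measure (X × Bool)) (h : X → ℝ) : ℝ :=
  ∫ p, bval p.2 * h p.1 ∂D

/-- error of a classifier under a distribution on `X × Bool` -/
def err [MeasurableSpace X] (D : Measure (X × Bool)) (h : X → ℝ) : ℝ :=
  (D {p | h p.1 ≠ bval p.2}).toReal

/-- `lam`-margin loss of `g` under a distribution on `X × Bool` -/
def mloss [MeasurableSpace X] (D : Measure (X × Bool)) (lam : ℝ) (g : X → ℝ) : ℝ :=
  (D {p | bval p.2 * g p.1 ≤ lam}).toReal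

/-- the `m`-fold product (i.i.d. sample) measure -/
def iid {α : Type*} [MeasurableSpace α] (D : Measure α) (m : ℕ) :
    Measure (Fin m → α) :=
  Measure.pi fun _ => D

/-- truncated logarithm -/
def Ln (x : ℝ) : ℝ := Real.log (max x (Real.exp 1))

/-- `H` shatters the points `x` -/
def Shatters (H : Set (X → ℝ)) {d : ℕ} (x : Fin d → X) : Prop :=
  ∀ b : Fin d → Bool, ∃ h ∈ H, ∀ i, h (x i) = bval (b i)

/-- the VC dimension of `H` is at most `d` -/
def VCLe (H : Set (X → ℝ)) (d : ℕ) : Prop :=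
  ∀ x : Fin (d + 1) → X, Function.Injective x → ¬ Shatters H x

/-- `H` α-fat-shatters the points `x` with levels `r` -/
def FatShatters (H : Set (X → ℝ)) (α : ℝ) {d : ℕ} (x : Fin d → X) (r : Fin d → ℝ) : Prop :=
  ∀ b : Fin d → Bool, ∃ h ∈ H, ∀ i,
    (b i = true → r i + α ≤ h (x i)) ∧ (b i = false → h (x i) ≤ r i - α)

/-- `d` is the fat-shattering dimension of `H` at level `α` -/
def IsFatDim (H : Set (X → ℝ)) (α : ℝ) (d : ℕ) : Prop :=
  IsGreatest {k : ℕ | ∃ (x : Fin k → X) (r : Fin k → ℝ), FatShatters H α x r} d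

/-- `(γ, ε₀, δ₀, m₀, F, H)` agnostic weak learner -/
def IsAWL [MeasurableSpace X] (γ ε₀ δ₀ : ℝ) (m₀ : ℕ) (F H : Set (X → ℝ))
    (W : List (X × Bool) → X → ℝ) : Prop :=
  (∀ S, W S ∈ H) ∧
  ∀ D : Measure (X × Bool), IsProbabilityMeasure D →
    ENNReal.ofReal (1 - δ₀) ≤
      iid D m₀ {S | γ * (⨆ f ∈ F, corr D f) - ε₀ ≤ corr D (W (List.ofFn S))}

/-- sign function, with `sign 0 = 1` -/
def rsign (x : ℝ) : ℝ := if 0 ≤ x then 1 else -1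

/-- empirical `lam`-margin loss on a finite sample -/
def empLoss {m : ℕ} (S : Fin m → X × Bool) (lam : ℝ) (g : X → ℝ) : ℝ :=
  (∑ i, if bval (S i).2 * g (S i).1 ≤ lam then (1 : ℝ) else 0) / m

/-- truncation of `v` at level `γ` -/
def truncAt (γ : ℝ) (v : X → ℝ) : X → ℝ := fun x => max (-γ) (min γ (v x))

/-- `N` is an `ε`-cover of `G` in sup norm over the points `x` -/
def IsCover {k : ℕ} (x : Fin k → X) (G : Set (X → ℝ)) (ε : ℝ) (N : Set (X → ℝ)) : Prop :=
  ∀ g ∈ G, ∃ g' ∈ N, ∀ i, |g (x i) - g' (x i)| ≤ ε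

/-- minimal size of a finite `ε`-cover of `G` over the points `x` (∞ if none exists) -/
def covNum {k : ℕ} (x : Fin k → X) (G : Set (X → ℝ)) (ε : ℝ) : ℝ≥0∞ :=
  ⨅ (N : Finset (X → ℝ)) (_ : IsCover x G ε ↑N), (N.card : ℝ≥0∞)

end Agb

open Agb

/-!
If many functions bounded by `1` are pairwise far apart in mean square, some coordinate and
threshold split them into two large parts separated by a margin. Iterating such splits yields so
many shattered level assignments that the number of functions is bounded in terms of the
fat-shattering dimension `V` and the number of coordinates. Since subsampling the coordinates at
random keeps the functions separated, the `L²` covering numbers satisfy `log N(ε) ≲ V / ε` in any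
dimension (the argument of Mendelson and Vershynin), and chaining bounds the Rademacher average
over `k` points by `√(V / k)`, up to the scale at which the chain stops.

On the other hand, if the convex hull `α`-fat-shatters `k` points, then the linear functionals
given by the sign patterns, being maximised on the hull at generators, force the Rademacher average
of the original class to be at least `α`. Hence `k ≲ V / α ^ 2`. A set fat-shattered by the
truncated hull is fat-shattered by the hull itself, because the levels lie within the truncation
range.
-/

namespace Agb

open Finset
open scoped BigOperators

variable {ι κ : Type*}

/-- The threshold `a` splits the family `Y` over `B` efficiently with margin `δ`: both
`{Y ≥ a + δ}` and `{Y ≤ a - δ}` are nonempty, and the square roots of their cardinalities add up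
to at least the square root of the cardinality of `B`. -/
structure IsEfficientSplit (B : Finset ι) (Y : ι → ℝ) (a δ : ℝ) : Prop where
  upper_nonempty : {s ∈ B | a + δ ≤ Y s}.Nonempty
  lower_nonempty : {s ∈ B | Y s ≤ a - δ}.Nonempty
  sqrt_card_le : √(#B) ≤ √(#{s ∈ B | a + δ ≤ Y s}) + √(#{s ∈ B | Y s ≤ a - δ})

lemma IsEfficientSplit.of_neg {B : Finset ι} {Y : ι → ℝ} {a δ : ℝ}
    (h : IsEfficientSplit B (-Y) a δ) : IsEfficientSplit B Y (-a) δ := by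
  obtain ⟨hupper, hlower, hcard⟩ := h
  have hle (s : ι) : a + δ ≤ (-Y) s ↔ Y s ≤ -a - δ := by
    rw [Pi.neg_apply, le_neg, neg_add']
  have hge (s : ι) : (-Y) s ≤ a - δ ↔ -a + δ ≤ Y s := by
    rw [Pi.neg_apply, neg_le, neg_sub', sub_neg_eq_add]
  simp only [hle, hge] at hupper hlower hcard
  exact ⟨hlower, hupper, hcard.trans_eq (add_comm _ _)⟩

lemma IsEfficientSplit.of_abs_sub_le {B : Finset ι} {Y : ι → ℝ} {a a' δ δ' : ℝ}
    (h : IsEfficientSplit B Y a δ) (ha : |a - a'| ≤ δ - δ') : IsEfficientSplit B Y a' δ' := by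
  obtain ⟨hlow, hup⟩ := abs_le.mp ha
  have hupper : {s ∈ B | a + δ ≤ Y s} ⊆ {s ∈ B | a' + δ' ≤ Y s} :=
    monotone_filter_right B fun s _ hs => by linarith
  have hlower : {s ∈ B | Y s ≤ a - δ} ⊆ {s ∈ B | Y s ≤ a' - δ'} :=
    monotone_filter_right B fun s _ hs => by linarith
  refine ⟨h.upper_nonempty.mono hupper, h.lower_nonempty.mono hlower, h.sqrt_card_le.trans ?_⟩
  gcongr

lemma IsEfficientSplit.abs_threshold_le {B : Finset ι} {Y : ι → ℝ} {a δ c : ℝ}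
    (h : IsEfficientSplit B Y a δ) (hδ : 0 ≤ δ) (hY : ∀ s ∈ B, |Y s| ≤ c) : |a| ≤ c := by
  obtain ⟨s, hs⟩ := h.upper_nonempty
  obtain ⟨t, ht⟩ := h.lower_nonempty
  rw [mem_filter] at hs ht
  have hYs := (abs_le.mp (hY s hs.1)).2
  have hYt := (abs_le.mp (hY t ht.1)).1
  exact abs_le.mpr ⟨by linarith [ht.2], by linarith [hs.2]⟩

lemma two_mul_le_sub_of_sqrt_add_sqrt_lt {p q n : ℝ} (hp : 0 ≤ p) (hq : 0 ≤ q) (hn : n ≤ 2 * q)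
    (h : √p + √q < √n) : 2 * p ≤ n - q := by
  have hn0 : 0 ≤ n := (Real.sqrt_pos.mp (h.trans_le' (by positivity))).le
  have hq3 : √n ≤ 3 * √q := by
    rw [Real.sqrt_le_left (by positivity), mul_pow, Real.sq_sqrt hq]
    linarith
  have hlt : √p < √n - √q := by linarith
  have hpq : √p ^ 2 ≤ (√n - √q) ^ 2 := by gcongr
  nlinarith [Real.sq_sqrt hp, Real.sq_sqrt hq, Real.sq_sqrt hn0, Real.sqrt_nonneg p,
    mul_nonneg (sub_nonneg.mpr hq3) (Real.sqrt_nonneg p |>.trans hlt.le)]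

lemma two_mul_card_filter_add_lt_le {B : Finset ι} {Y : ι → ℝ} {a δ : ℝ}
    (hsplit : ¬ IsEfficientSplit B Y (a + δ) δ) (hmed : 2 * #{s ∈ B | a < Y s} ≤ #B) :
    2 * #{s ∈ B | a + 2 * δ < Y s} ≤ #{s ∈ B | a < Y s} := by
  have hcompl := B.card_filter_add_card_filter_not (fun s => a < Y s)
  simp only [not_lt] at hcompl
  have hsub : {s ∈ B | a + 2 * δ < Y s} ⊆ {s ∈ B | a + δ + δ ≤ Y s} :=
    monotone_filter_right B fun s _ hs => by linarith
  obtain hempty | hupper := {s ∈ B | a + δ + δ ≤ Y s}.eq_empty_or_nonempty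
  · simp [subset_empty.mp (hempty ▸ hsub)]
  have hlower : {s ∈ B | Y s ≤ a}.Nonempty := by
    have := (hupper.mono (filter_subset _ _)).card_pos
    exact card_pos.mp (by lia)
  have hsqrt : √(#{s ∈ B | a + δ + δ ≤ Y s}) + √(#{s ∈ B | Y s ≤ a}) < √(#B) := by
    by_contra! hle
    exact hsplit ⟨hupper, by simpa using hlower, by simpa using hle⟩
  have hhalf := two_mul_le_sub_of_sqrt_add_sqrt_lt (by positivity) (by positivity)
    (by norm_cast; lia) hsqrt
  have hcard := card_le_card hsub
  have hbound : 2 * #{s ∈ B | a + δ + δ ≤ Y s} + #{s ∈ B | Y s ≤ a} ≤ #B := by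
    exact_mod_cast le_sub_iff_add_le.mp hhalf
  lia

lemma posPart_sq_le {δ : ℝ} (hδ : 0 < δ) (x : ℝ) :
    max x 0 ^ 2 ≤ 3 / 2 * max (x - 2 * δ) 0 ^ 2 + if 0 < x then 12 * δ ^ 2 else 0 := by
  rcases le_or_gt x 0 with hx | hx
  · rw [max_eq_right hx, if_neg hx.not_gt, zero_pow two_ne_zero]
    positivity
  rw [max_eq_left hx.le, if_pos hx]
  rcases le_total x (2 * δ) with hxδ | hxδ
  · nlinarith [sq_nonneg (max (x - 2 * δ) 0)]
  · rw [max_eq_left (by linarith)]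
    nlinarith [sq_nonneg (x - 6 * δ)]

/-- Beyond the median the tails halve every `2 * δ`, so the sum is dominated by a geometric one. -/
lemma sum_posPart_sq_le {B : Finset ι} {Y : ι → ℝ} {δ : ℝ} (hδ : 0 < δ)
    (hsplit : ∀ a, ¬ IsEfficientSplit B Y a δ) (a : ℝ) (hmed : 2 * #{s ∈ B | a < Y s} ≤ #B) :
    ∑ s ∈ B, max (Y s - a) 0 ^ 2 ≤ 48 * δ ^ 2 * #{s ∈ B | a < Y s} := by
  induction hn : #{s ∈ B | a < Y s} using Nat.strong_induction_on generalizing a with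
  | _ n ih =>
    subst hn
    obtain hzero | hpos := Nat.eq_zero_or_pos #{s ∈ B | a < Y s}
    · have hle : ∀ s ∈ B, Y s ≤ a := by
        simpa [filter_eq_empty_iff] using card_eq_zero.mp hzero
      rw [hzero, sum_congr rfl fun s hs => by rw [max_eq_right (sub_nonpos.mpr (hle s hs))]]
      simp
    have hhalf := two_mul_card_filter_add_lt_le (hsplit _) hmed
    have htail := ih _ (by lia) (a + 2 * δ) (by lia) rfl
    have hhalf' : 2 * (#{s ∈ B | a + 2 * δ < Y s} : ℝ) ≤ #{s ∈ B | a < Y s} := mod_cast hhalf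
    calc ∑ s ∈ B, max (Y s - a) 0 ^ 2
        ≤ ∑ s ∈ B, (3 / 2 * max (Y s - a - 2 * δ) 0 ^ 2 +
            if 0 < Y s - a then 12 * δ ^ 2 else 0) :=
          sum_le_sum fun s _ => posPart_sq_le hδ _
      _ = 3 / 2 * ∑ s ∈ B, max (Y s - (a + 2 * δ)) 0 ^ 2 +
            12 * δ ^ 2 * #{s ∈ B | a < Y s} := by
          simp only [sum_add_distrib, ← mul_sum, sub_sub, sub_pos, ← sum_filter, sum_const,
            nsmul_eq_mul]
          ring
      _ ≤ 48 * δ ^ 2 * #{s ∈ B | a < Y s} := by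
          nlinarith [mul_le_mul_of_nonneg_left hhalf' (sq_nonneg δ)]

lemma exists_median {α : Type*} [LinearOrder α] {B : Finset ι} (hB : B.Nonempty) (Y : ι → α) :
    ∃ M, 2 * #{s ∈ B | M < Y s} ≤ #B ∧ 2 * #{s ∈ B | Y s < M} ≤ #B := by
  have hU : {s ∈ B | 2 * #{t ∈ B | Y s < Y t} ≤ #B}.Nonempty := by
    obtain ⟨s, hs, hmax⟩ := B.exists_max_image Y hB
    refine ⟨s, mem_filter.mpr ⟨hs, ?_⟩⟩
    rw [filter_eq_empty_iff.mpr fun t ht => (hmax t ht).not_gt]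
    simp
  obtain ⟨m, hm, hmin⟩ := exists_min_image _ Y hU
  refine ⟨Y m, (mem_filter.mp hm).2, ?_⟩
  by_contra! hlower
  obtain ⟨s, hs, hmax⟩ := exists_max_image {s ∈ B | Y s < Y m} Y (card_pos.mp (by lia))
  rw [mem_filter] at hs
  have hsub : {t ∈ B | Y s < Y t} ⊆ {t ∈ B | ¬ Y t < Y m} := fun t ht => by
    rw [mem_filter] at ht ⊢
    exact ⟨ht.1, fun hlt => (hmax t (mem_filter.mpr ⟨ht.1, hlt⟩)).not_gt ht.2⟩
  have hcard := card_le_card hsub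
  have hcompl := B.card_filter_add_card_filter_not (fun t => Y t < Y m)
  exact (hmin s (mem_filter.mpr ⟨hs.1, by lia⟩)).not_gt hs.2

lemma exists_sum_sub_sq_le {B : Finset ι} {Y : ι → ℝ} {δ : ℝ} (hδ : 0 < δ)
    (hsplit : ∀ a, ¬ IsEfficientSplit B Y a δ) :
    ∃ M, ∑ s ∈ B, (Y s - M) ^ 2 ≤ 48 * δ ^ 2 * #B := by
  obtain rfl | hB := B.eq_empty_or_nonempty
  · simp
  obtain ⟨M, hupper, hlower⟩ := exists_median hB Y
  have hneg (a : ℝ) : ¬ IsEfficientSplit B (-Y) a δ := fun h => hsplit _ h.of_neg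
  have hpos_sum := sum_posPart_sq_le hδ hsplit M hupper
  have hneg_sum := sum_posPart_sq_le hδ hneg (-M) (by simpa using hlower)
  simp only [Pi.neg_apply, neg_lt_neg_iff] at hneg_sum
  have hcard : 2 * (#{s ∈ B | M < Y s} : ℝ) ≤ #B ∧ 2 * (#{s ∈ B | Y s < M} : ℝ) ≤ #B :=
    ⟨mod_cast hupper, mod_cast hlower⟩
  refine ⟨M, ?_⟩
  calc ∑ s ∈ B, (Y s - M) ^ 2
      = ∑ s ∈ B, max (Y s - M) 0 ^ 2 + ∑ s ∈ B, max (-Y s - -M) 0 ^ 2 := by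
        rw [← sum_add_distrib]
        refine sum_congr rfl fun s _ => ?_
        obtain hs | hs := le_total (Y s) M
        · rw [max_eq_right (by linarith), max_eq_left (by linarith)]
          ring
        · rw [max_eq_left (by linarith), max_eq_right (by linarith)]
          ring
    _ ≤ 48 * δ ^ 2 * #{s ∈ B | M < Y s} + 48 * δ ^ 2 * #{s ∈ B | Y s < M} := by
        gcongr
    _ ≤ 48 * δ ^ 2 * #B := by
        nlinarith [sq_nonneg δ]

lemma sum_sum_sub_sq_le (B : Finset ι) (Y : ι → ℝ) (M : ℝ) :
    ∑ s ∈ B, ∑ t ∈ B, (Y s - Y t) ^ 2 ≤ 2 * #B * ∑ s ∈ B, (Y s - M) ^ 2 :=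
  calc ∑ s ∈ B, ∑ t ∈ B, (Y s - Y t) ^ 2
      = ∑ s ∈ B, ∑ t ∈ B, ((Y s - M) ^ 2 + (Y t - M) ^ 2 - 2 * ((Y s - M) * (Y t - M))) := by
        refine sum_congr rfl fun s _ => sum_congr rfl fun t _ => ?_
        ring
    _ = 2 * #B * ∑ s ∈ B, (Y s - M) ^ 2 - 2 * (∑ s ∈ B, (Y s - M)) ^ 2 := by
        simp only [sum_sub_distrib, sum_add_distrib, sum_const, nsmul_eq_mul, ← mul_sum,
          ← sum_mul]
        ring
    _ ≤ 2 * #B * ∑ s ∈ B, (Y s - M) ^ 2 := by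
        linarith [sq_nonneg (∑ s ∈ B, (Y s - M))]

lemma exists_isEfficientSplit_of_spread {B : Finset ι} {Y : ι → ℝ} {δ : ℝ} (hδ : 0 < δ)
    (hspread : 96 * δ ^ 2 * #B ^ 2 < ∑ s ∈ B, ∑ t ∈ B, (Y s - Y t) ^ 2) :
    ∃ a, IsEfficientSplit B Y a δ := by
  by_contra! hsplit
  obtain ⟨M, hM⟩ := exists_sum_sub_sq_le hδ hsplit
  refine (hspread.trans_le (sum_sum_sub_sq_le B Y M)).not_ge ?_
  calc 2 * #B * ∑ s ∈ B, (Y s - M) ^ 2 ≤ 2 * #B * (48 * δ ^ 2 * #B) := by gcongr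
    _ = 96 * δ ^ 2 * #B ^ 2 := by ring

/-- The squared `L²` distance of two vectors with respect to the uniform probability measure on
the coordinates. -/
def meanSqDist [Fintype κ] (u v : κ → ℝ) : ℝ := 𝔼 i, (u i - v i) ^ 2

lemma meanSqDist_nonneg [Fintype κ] (u v : κ → ℝ) : 0 ≤ meanSqDist u v :=
  expect_nonneg fun _ _ => sq_nonneg _

lemma card_mul_le_sum_sum_meanSqDist [Fintype κ] {B : Finset ι} {f : ι → κ → ℝ} {ρ : ℝ}
    (hsep : (B : Set ι).Pairwise fun s t => ρ ≤ meanSqDist (f s) (f t)) :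
    (#B * #B - #B) * ρ ≤ ∑ s ∈ B, ∑ t ∈ B, meanSqDist (f s) (f t) := by
  classical
  calc (#B * #B - #B) * ρ = ∑ _p ∈ B.offDiag, ρ := by
        rw [sum_const, offDiag_card, nsmul_eq_mul, Nat.cast_sub (Nat.le_mul_self _)]
        push_cast
        rfl
    _ ≤ ∑ p ∈ B.offDiag, meanSqDist (f p.1) (f p.2) := sum_le_sum fun p hp => by
        obtain ⟨hs, ht, hne⟩ := mem_offDiag.mp hp
        exact hsep hs ht hne
    _ ≤ ∑ p ∈ B ×ˢ B, meanSqDist (f p.1) (f p.2) :=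
        sum_le_sum_of_subset_of_nonneg (product_sdiff_diag B ▸ sdiff_subset) fun _ _ _ =>
          meanSqDist_nonneg _ _
    _ = ∑ s ∈ B, ∑ t ∈ B, meanSqDist (f s) (f t) := sum_product _ _ _

lemma exists_coordinate_isEfficientSplit [Fintype κ] {B : Finset ι} (hB : 2 ≤ #B)
    {f : ι → κ → ℝ} {δ ρ : ℝ} (hδ : 0 < δ) (hρ : 192 * δ ^ 2 < ρ)
    (hsep : (B : Set ι).Pairwise fun s t => ρ ≤ meanSqDist (f s) (f t)) :
    ∃ i a, IsEfficientSplit B (f · i) a δ := by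
  have hcard : (2 : ℝ) ≤ #B := mod_cast hB
  have hlt : 96 * δ ^ 2 * #B ^ 2 < 𝔼 i, ∑ s ∈ B, ∑ t ∈ B, (f s i - f t i) ^ 2 := by
    calc 96 * δ ^ 2 * #B ^ 2 < ρ / 2 * #B ^ 2 := by gcongr; linarith
      _ ≤ (#B * #B - #B) * ρ := by
        have hρ0 : 0 ≤ ρ := by nlinarith [sq_nonneg δ]
        nlinarith [mul_nonneg (mul_nonneg hρ0 (by positivity : (0 : ℝ) ≤ #B))
          (sub_nonneg.mpr hcard)]
      _ ≤ ∑ s ∈ B, ∑ t ∈ B, meanSqDist (f s) (f t) := card_mul_le_sum_sum_meanSqDist hsep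
      _ = 𝔼 i, ∑ s ∈ B, ∑ t ∈ B, (f s i - f t i) ^ 2 := by
        simp only [expect_sum_comm, meanSqDist]
  have hne : (univ : Finset κ).Nonempty := by
    rw [nonempty_iff_ne_empty]
    intro hempty
    rw [hempty, expect_empty] at hlt
    exact hlt.not_ge (by positivity)
  obtain ⟨i, -, hi⟩ := exists_lt_of_lt_expect hne hlt
  exact ⟨i, exists_isEfficientSplit_of_spread hδ hi⟩

lemma exists_finset_grid {δ : ℝ} (hδ : 0 < δ) :
    ∃ L : Finset ℝ, #L ≤ 2 / δ + 1 ∧ ∀ a, |a| ≤ 1 → ∃ g ∈ L, |a - g| ≤ δ / 2 := by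
  refine ⟨(range (⌊2 / δ⌋₊ + 1)).image fun j : ℕ => -1 + (j + 1 / 2) * δ, ?_, fun a ha => ?_⟩
  · calc _ ≤ ((#(range (⌊2 / δ⌋₊ + 1)) : ℕ) : ℝ) := mod_cast card_image_le
      _ ≤ 2 / δ + 1 := by
        rw [card_range, Nat.cast_add_one]
        gcongr
        exact Nat.floor_le (by positivity)
  obtain ⟨hlow, hup⟩ := abs_le.mp ha
  have hnonneg : 0 ≤ (a + 1) / δ := div_nonneg (by linarith) hδ.le
  have hfloor := (le_div_iff₀ hδ).mp (Nat.floor_le hnonneg)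
  have hceil := (div_lt_iff₀ hδ).mp (Nat.lt_floor_add_one ((a + 1) / δ))
  refine ⟨_, mem_image.mpr ⟨⌊(a + 1) / δ⌋₊, mem_range_succ_iff.mpr ?_, rfl⟩, ?_⟩
  · gcongr
    linarith
  · rw [abs_le]
    constructor <;> linarith

lemma exists_grid_isEfficientSplit [Fintype κ] {B : Finset ι} (hB : 2 ≤ #B) {f : ι → κ → ℝ}
    {c δ ρ : ℝ} (hδ : 0 < δ) (hρ : 192 * δ ^ 2 < ρ) (hf : ∀ s ∈ B, ∀ i, |f s i| ≤ c)
    (hsep : (B : Set ι).Pairwise fun s t => ρ ≤ meanSqDist (f s) (f t))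
    {L : Finset ℝ} (hL : ∀ a, |a| ≤ c → ∃ g ∈ L, |a - g| ≤ δ / 2) :
    ∃ i, ∃ g ∈ L, IsEfficientSplit B (f · i) g (δ / 2) := by
  obtain ⟨i, a, ha⟩ := exists_coordinate_isEfficientSplit hB hδ hρ hsep
  obtain ⟨g, hg, hag⟩ := hL a (ha.abs_threshold_le hδ.le fun s hs => hf s hs i)
  exact ⟨i, g, hg, ha.of_abs_sub_le (by linarith)⟩

/-- Partial assignments of levels from `L` to coordinates (`none` leaves a coordinate out) whose
domain is shattered with margin `η` by the vectors `f s`, `s ∈ B`, at the assigned levels. -/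
def shatteredLevels [Fintype κ] (L : Finset ℝ) (f : ι → κ → ℝ) (η : ℝ) (B : Finset ι) :
    Finset (κ → Option L) :=
  open Classical in
  {ρ | ∀ b : κ → Bool, ∃ s ∈ B, ∀ i, ∀ g ∈ ρ i,
    (b i = true → g + η ≤ f s i) ∧ (b i = false → f s i ≤ g - η)}

section ShatteredLevels

variable [Fintype κ] {L : Finset ℝ} {f : ι → κ → ℝ} {η : ℝ} {B : Finset ι} {ρ : κ → Option L}

lemma mem_shatteredLevels : ρ ∈ shatteredLevels L f η B ↔
    ∀ b : κ → Bool, ∃ s ∈ B, ∀ i, ∀ g ∈ ρ i,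
      (b i = true → g + η ≤ f s i) ∧ (b i = false → f s i ≤ g - η) := by
  classical simp [shatteredLevels]

lemma shatteredLevels_mono {B' : Finset ι} (h : B ⊆ B') :
    shatteredLevels L f η B ⊆ shatteredLevels L f η B' := fun ρ hρ => by
  rw [mem_shatteredLevels] at hρ ⊢
  exact fun b => (hρ b).imp fun s hs => ⟨h hs.1, hs.2⟩

lemma lt_of_mem_shatteredLevels_upper (hη : 0 < η) {i : κ} {a : ℝ} {g : L}
    (hρ : ρ ∈ shatteredLevels L f η {s ∈ B | a + η ≤ f s i}) (hg : g ∈ ρ i) : a < g := by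
  obtain ⟨s, hs, hlevels⟩ := mem_shatteredLevels.mp hρ fun _ => false
  linarith [(mem_filter.mp hs).2, (hlevels i g hg).2 rfl]

lemma lt_of_mem_shatteredLevels_lower (hη : 0 < η) {i : κ} {a : ℝ} {g : L}
    (hρ : ρ ∈ shatteredLevels L f η {s ∈ B | f s i ≤ a - η}) (hg : g ∈ ρ i) : g < a := by
  obtain ⟨s, hs, hlevels⟩ := mem_shatteredLevels.mp hρ fun _ => true
  linarith [(mem_filter.mp hs).2, (hlevels i g hg).1 rfl]

lemma update_mem_shatteredLevels [DecidableEq κ] {i : κ} {g : L}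
    (hupper : ρ ∈ shatteredLevels L f η {s ∈ B | g + η ≤ f s i})
    (hlower : ρ ∈ shatteredLevels L f η {s ∈ B | f s i ≤ g - η}) :
    Function.update ρ i (some g) ∈ shatteredLevels L f η B := by
  rw [mem_shatteredLevels] at hupper hlower ⊢
  intro b
  obtain ⟨s, hs, hsi, hlevels⟩ : ∃ s ∈ B,
      ((b i = true → g + η ≤ f s i) ∧ (b i = false → f s i ≤ g - η)) ∧
      ∀ j, ∀ g' ∈ ρ j, (b j = true → g' + η ≤ f s j) ∧ (b j = false → f s j ≤ g' - η) := by
    cases hb : b i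
    · obtain ⟨s, hs, hlevels⟩ := hlower b
      exact ⟨s, (mem_filter.mp hs).1, by simpa using (mem_filter.mp hs).2, hlevels⟩
    · obtain ⟨s, hs, hlevels⟩ := hupper b
      exact ⟨s, (mem_filter.mp hs).1, by simpa using (mem_filter.mp hs).2, hlevels⟩
  refine ⟨s, hs, fun j g' hg' => ?_⟩
  obtain rfl | hj := eq_or_ne j i
  · rw [Function.update_self, Option.mem_some_iff] at hg'
    exact hg' ▸ hsi
  · rw [Function.update_of_ne hj] at hg'
    exact hlevels j g' hg'

/-- An assignment shattered by both halves of the split does not use the coordinate `i`, so it can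
be extended by the level `g` at `i`; these extensions are shattered by neither half. -/
lemma card_shatteredLevels_split (hη : 0 < η) (i : κ) (g : L) :
    #(shatteredLevels L f η {s ∈ B | g + η ≤ f s i}) +
      #(shatteredLevels L f η {s ∈ B | f s i ≤ g - η}) ≤ #(shatteredLevels L f η B) := by
  classical
  set U := shatteredLevels L f η {s ∈ B | g + η ≤ f s i}
  set D := shatteredLevels L f η {s ∈ B | f s i ≤ g - η}
  have hnone : ∀ ρ ∈ U ∩ D, ρ i = none := fun ρ hρ => by
    rw [mem_inter] at hρ
    exact Option.eq_none_iff_forall_not_mem.mpr fun g' hg' =>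
      lt_asymm (lt_of_mem_shatteredLevels_upper hη hρ.1 hg')
        (lt_of_mem_shatteredLevels_lower hη hρ.2 hg')
  let extend (ρ : κ → Option L) : κ → Option L := Function.update ρ i (some g)
  have hinj : Set.InjOn extend (U ∩ D : Finset _) := fun ρ hρ ρ' hρ' heq => by
    rw [← Function.update_eq_self i ρ, ← Function.update_eq_self i ρ', hnone ρ hρ, hnone ρ' hρ']
    simpa [extend] using congrArg (Function.update · i none) heq
  have hdisj : Disjoint (U ∪ D) ((U ∩ D).image extend) := by
    refine disjoint_right.mpr fun ρ hρ hUD => ?_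
    obtain ⟨ρ₀, -, rfl⟩ := mem_image.mp hρ
    have hg : g ∈ extend ρ₀ i := by simp [extend]
    obtain hU | hD := mem_union.mp hUD
    · exact lt_irrefl _ (lt_of_mem_shatteredLevels_upper hη hU hg)
    · exact lt_irrefl _ (lt_of_mem_shatteredLevels_lower hη hD hg)
  have hsub : (U ∪ D) ∪ (U ∩ D).image extend ⊆ shatteredLevels L f η B := by
    refine union_subset (union_subset ?_ ?_) (image_subset_iff.mpr fun ρ hρ => ?_)
    · exact shatteredLevels_mono (filter_subset _ _)
    · exact shatteredLevels_mono (filter_subset _ _)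
    · exact update_mem_shatteredLevels (mem_inter.mp hρ).1 (mem_inter.mp hρ).2
  calc #U + #D = #(U ∪ D) + #(U ∩ D) := (card_union_add_card_inter _ _).symm
    _ = #((U ∪ D) ∪ (U ∩ D).image extend) := by
      rw [card_union_of_disjoint hdisj, card_image_of_injOn hinj]
    _ ≤ #(shatteredLevels L f η B) := card_le_card hsub

lemma shatteredLevels_nonempty (hB : B.Nonempty) : (shatteredLevels L f η B).Nonempty := by
  obtain ⟨s, hs⟩ := hB
  exact ⟨fun _ => none, mem_shatteredLevels.mpr fun _ => ⟨s, hs, by simp⟩⟩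

lemma sqrt_card_le_card_shatteredLevels (hη : 0 < η)
    (hsplit : ∀ B' ⊆ B, 2 ≤ #B' → ∃ i, ∃ g ∈ L, IsEfficientSplit B' (f · i) g η) :
    √(#B) ≤ #(shatteredLevels L f η B) := by
  induction B using Finset.strongInduction with
  | H B ih =>
    obtain hsmall | hlarge := lt_or_ge #B 2
    · obtain rfl | hB := B.eq_empty_or_nonempty
      · simp
      · calc √(#B) ≤ 1 := Real.sqrt_le_one.mpr (by exact_mod_cast Nat.lt_succ_iff.mp hsmall)
          _ ≤ #(shatteredLevels L f η B) := mod_cast (shatteredLevels_nonempty hB).card_pos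
    obtain ⟨i, g, hg, ⟨s, hs⟩, ⟨t, ht⟩, hsqrt⟩ := hsplit B Subset.rfl hlarge
    rw [mem_filter] at hs ht
    have hupper : {s ∈ B | g + η ≤ f s i} ⊂ B :=
      filter_ssubset.mpr ⟨t, ht.1, by linarith [ht.2]⟩
    have hlower : {s ∈ B | f s i ≤ g - η} ⊂ B :=
      filter_ssubset.mpr ⟨s, hs.1, by linarith [hs.2]⟩
    calc √(#B) ≤ √(#{s ∈ B | g + η ≤ f s i}) + √(#{s ∈ B | f s i ≤ g - η}) := hsqrt
      _ ≤ #(shatteredLevels L f η {s ∈ B | g + η ≤ f s i}) +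
          #(shatteredLevels L f η {s ∈ B | f s i ≤ g - η}) :=
        add_le_add (ih _ hupper fun B' hB' => hsplit B' (hB'.trans hupper.1))
          (ih _ hlower fun B' hB' => hsplit B' (hB'.trans hlower.1))
      _ ≤ #(shatteredLevels L f η B) := mod_cast card_shatteredLevels_split hη i ⟨g, hg⟩

end ShatteredLevels

lemma card_mul_pow_le_of_card_isSome_le {G : Type*} [Fintype G] [Fintype κ] {V : ℕ}
    {S : Finset (κ → Option G)} (hS : ∀ ρ ∈ S, #{i | (ρ i).isSome} ≤ V) {y : ℝ} (hy0 : 0 ≤ y)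
    (hy1 : y ≤ 1) : #S * y ^ V ≤ Real.exp (Fintype.card G * y * Fintype.card κ) := by
  classical
  let weight (o : Option G) : ℝ := if o.isSome then y else 1
  have hweight (o : Option G) : 0 ≤ weight o := by
    unfold weight
    split_ifs <;> linarith
  calc #S * y ^ V = ∑ _ρ ∈ S, y ^ V := by rw [sum_const, nsmul_eq_mul]
    _ ≤ ∑ ρ ∈ S, ∏ i, weight (ρ i) := sum_le_sum fun ρ hρ => by
        rw [prod_ite, prod_const, prod_const_one, mul_one]
        exact pow_le_pow_of_le_one hy0 hy1 (hS ρ hρ)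
    _ ≤ ∑ ρ : κ → Option G, ∏ i, weight (ρ i) :=
        sum_le_sum_of_subset_of_nonneg (subset_univ S) fun _ _ _ =>
          prod_nonneg fun _ _ => hweight _
    _ = (∑ o, weight o) ^ Fintype.card κ := by
        rw [← Fintype.prod_sum fun _ => weight, prod_const, card_univ]
    _ = (Fintype.card G * y + 1) ^ Fintype.card κ := by
        rw [Fintype.sum_option]
        simp [weight, add_comm]
    _ ≤ Real.exp (Fintype.card G * y) ^ Fintype.card κ := by
        gcongr
        exact Real.add_one_le_exp _
    _ = Real.exp (Fintype.card G * y * Fintype.card κ) := by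
        rw [← Real.exp_nat_mul, mul_comm]

section FatShattering

variable {X : Type*} {H : Set (X → ℝ)} {α : ℝ} {V : ℕ}

lemma FatShatters.mono {H' : Set (X → ℝ)} {α' : ℝ} {q : ℕ} {x : Fin q → X}
    {r : Fin q → ℝ} (h : FatShatters H α x r) (hH : H ⊆ H') (hα : α' ≤ α) :
    FatShatters H' α' x r := fun b => by
  obtain ⟨g, hg, hb⟩ := h b
  exact ⟨g, hH hg, fun i => ⟨fun hi => by linarith [(hb i).1 hi],
    fun hi => by linarith [(hb i).2 hi]⟩⟩

/-- The fat-shattering dimension of `H` at level `α` is at most `V`. -/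
def FatDimLE (H : Set (X → ℝ)) (α : ℝ) (V : ℕ) : Prop :=
  ∀ ⦃q : ℕ⦄ ⦃x : Fin q → X⦄ ⦃r : Fin q → ℝ⦄, FatShatters H α x r → q ≤ V

lemma FatDimLE.mono {H' : Set (X → ℝ)} {α' : ℝ} (h : FatDimLE H α V) (hH : H' ⊆ H)
    (hα : α ≤ α') : FatDimLE H' α' V := fun _ _ _ hx => h (hx.mono hH hα)

lemma FatDimLE.image_comp {Z : Type*} (h : FatDimLE H α V) (φ : Z → X) :
    FatDimLE ((· ∘ φ) '' H) α V := fun q x r hx => by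
  refine h (x := φ ∘ x) (r := r) fun b => ?_
  obtain ⟨_, ⟨g, hg, rfl⟩, hb⟩ := hx b
  exact ⟨g, hg, hb⟩

lemma FatDimLE.card_isSome_le [Fintype κ] {L : Finset ℝ} {f : ι → κ → ℝ} {B : Finset ι}
    (hV : FatDimLE (f '' B) α V) {ρ : κ → Option L} (hρ : ρ ∈ shatteredLevels L f α B) :
    #{i | (ρ i).isSome} ≤ V := by
  classical
  set S : Finset κ := {i | (ρ i).isSome}
  have hsome (j : S) : (ρ j).isSome := (mem_filter.mp j.2).2
  refine hV (x := fun j => S.equivFin.symm j)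
    (r := fun j => (ρ (S.equivFin.symm j)).get (hsome _)) fun b => ?_
  obtain ⟨s, hs, hlevels⟩ := mem_shatteredLevels.mp hρ
    fun i => if h : i ∈ S then b (S.equivFin ⟨i, h⟩) else true
  refine ⟨f s, ⟨s, hs, rfl⟩, fun j => ?_⟩
  simpa using hlevels (S.equivFin.symm j) _ (Option.get_mem (hsome _))

end FatShattering

lemma sqrt_card_mul_pow_le_exp [Fintype κ] {B : Finset ι} {f : ι → κ → ℝ} {ε : ℝ} (hε : 0 < ε)
    (hε2 : ε ≤ 2) (hf : ∀ s ∈ B, ∀ i, |f s i| ≤ 1)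
    (hsep : (B : Set ι).Pairwise fun s t => ε ^ 2 / 2 ≤ meanSqDist (f s) (f t))
    {V : ℕ} (hV : FatDimLE (f '' B) (ε / 40) V) {y : ℝ} (hy0 : 0 ≤ y) (hy1 : y ≤ 1) :
    √(#B) * y ^ V ≤ Real.exp (42 / ε * y * Fintype.card κ) := by
  obtain ⟨L, hLcard, hL⟩ := exists_finset_grid (δ := ε / 20) (by positivity)
  have hsplit : ∀ B' ⊆ B, 2 ≤ #B' → ∃ i, ∃ g ∈ L, IsEfficientSplit B' (f · i) g (ε / 40) := by
    intro B' hB' hcard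
    obtain ⟨i, g, hg, h⟩ := exists_grid_isEfficientSplit hcard (by positivity) (by nlinarith)
      (fun s hs => hf s (hB' hs)) (hsep.mono (coe_subset.mpr hB')) hL
    exact ⟨i, g, hg, by convert h using 1; ring⟩
  have hLcard' : (Fintype.card L : ℝ) ≤ 42 / ε := by
    rw [Fintype.card_coe]
    refine hLcard.trans ?_
    rw [div_add_one (by positivity), div_le_div_iff₀ (by positivity) hε]
    nlinarith
  calc √(#B) * y ^ V ≤ #(shatteredLevels L f (ε / 40) B) * y ^ V := by
        gcongr
        exact sqrt_card_le_card_shatteredLevels (by positivity) hsplit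
    _ ≤ Real.exp (Fintype.card L * y * Fintype.card κ) :=
        card_mul_pow_le_of_card_isSome_le (fun _ => hV.card_isSome_le) hy0 hy1
    _ ≤ Real.exp (42 / ε * y * Fintype.card κ) := by gcongr

lemma exp_neg_div_four_le {y : ℝ} (hy0 : 0 ≤ y) (hy1 : y ≤ 1) :
    Real.exp (-(y / 4)) ≤ 1 - 3 / 16 * y := by
  have habs : |-(y / 4)| ≤ 1 := by
    rw [abs_neg, abs_of_nonneg (by positivity)]
    linarith
  have htaylor := (abs_le.mp (Real.abs_exp_sub_one_sub_id_le habs)).2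
  nlinarith

/-- The Chernoff bound in counting form, from the moment generating function at `-1 / 4`. -/
lemma card_filter_sum_lt_le [Fintype κ] {Y : κ → ℝ} (hY0 : ∀ i, 0 ≤ Y i) (hY1 : ∀ i, Y i ≤ 1)
    {μ : ℝ} (hμ : μ ≤ 𝔼 i, Y i) (m : ℕ) :
    #{φ : Fin m → κ | ∑ j, Y (φ j) < m * μ / 2} ≤
      (Fintype.card κ : ℝ) ^ m * Real.exp (-(m * μ / 16)) := by
  have hmgf : ∑ i, Real.exp (-(Y i / 4)) ≤ Fintype.card κ * Real.exp (-(3 / 16 * μ)) :=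
    calc ∑ i, Real.exp (-(Y i / 4)) ≤ ∑ i, (1 - 3 / 16 * Y i) :=
          sum_le_sum fun i _ => exp_neg_div_four_le (hY0 i) (hY1 i)
      _ = Fintype.card κ * (1 - 3 / 16 * 𝔼 i, Y i) := by
          rw [sum_sub_distrib, ← mul_sum, ← Fintype.card_mul_expect Y, sum_const, card_univ,
            nsmul_eq_mul]
          ring
      _ ≤ Fintype.card κ * Real.exp (-(3 / 16 * μ)) := by
          gcongr
          linarith [Real.add_one_le_exp (-(3 / 16 * μ))]
  have hterm (φ : Fin m → κ) : (if ∑ j, Y (φ j) < m * μ / 2 then (1 : ℝ) else 0) ≤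
      Real.exp (m * μ / 8) * ∏ j, Real.exp (-(Y (φ j) / 4)) := by
    split_ifs with hφ
    · rw [← Real.exp_sum, ← Real.exp_add, Real.one_le_exp_iff, sum_neg_distrib, ← sum_div]
      linarith
    · positivity
  calc (#{φ : Fin m → κ | ∑ j, Y (φ j) < m * μ / 2} : ℝ)
      = ∑ φ : Fin m → κ, if ∑ j, Y (φ j) < m * μ / 2 then (1 : ℝ) else 0 := by
        rw [sum_boole]
    _ ≤ ∑ φ : Fin m → κ, Real.exp (m * μ / 8) * ∏ j, Real.exp (-(Y (φ j) / 4)) :=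
        sum_le_sum fun φ _ => hterm φ
    _ = Real.exp (m * μ / 8) * (∑ i, Real.exp (-(Y i / 4))) ^ m := by
        rw [← mul_sum, Fintype.sum_pow]
    _ ≤ Real.exp (m * μ / 8) * (Fintype.card κ * Real.exp (-(3 / 16 * μ))) ^ m := by gcongr
    _ = (Fintype.card κ : ℝ) ^ m * Real.exp (-(m * μ / 16)) := by
        rw [mul_pow, ← Real.exp_nat_mul, mul_left_comm, ← Real.exp_add]
        ring_nf

lemma card_filter_meanSqDist_comp_lt_le [Fintype κ] {u v : κ → ℝ} (hu : ∀ i, |u i| ≤ 1)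
    (hv : ∀ i, |v i| ≤ 1) {ρ : ℝ} (hρ : ρ ≤ meanSqDist u v) {m : ℕ} (hm : 0 < m) :
    #{φ : Fin m → κ | meanSqDist (u ∘ φ) (v ∘ φ) < ρ / 2} ≤
      (Fintype.card κ : ℝ) ^ m * Real.exp (-(m * ρ / 64)) := by
  have hm' : (0 : ℝ) < m := mod_cast hm
  have hle (i : κ) : (u i - v i) ^ 2 / 4 ≤ 1 := by
    have hdist : |u i - v i| ≤ 2 := (abs_sub _ _).trans (by linarith [hu i, hv i])
    nlinarith [sq_abs (u i - v i), abs_nonneg (u i - v i)]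
  have hmean : ρ / 4 ≤ 𝔼 i, (u i - v i) ^ 2 / 4 := by
    rw [← expect_div]
    exact div_le_div_of_nonneg_right hρ (by norm_num)
  have htail := card_filter_sum_lt_le (fun i => by positivity) hle hmean m
  have hiff (φ : Fin m → κ) : ∑ j, (u (φ j) - v (φ j)) ^ 2 / 4 < m * (ρ / 4) / 2 ↔
      meanSqDist (u ∘ φ) (v ∘ φ) < ρ / 2 := by
    rw [meanSqDist, Fintype.expect_eq_sum_div_card, Fintype.card_fin, div_lt_iff₀ hm', ← sum_div]
    simp only [Function.comp_apply]
    constructor <;> intro h <;> linarith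
  simp only [hiff] at htail
  convert htail using 4
  ring

lemma exists_separating_sample [Fintype κ] [Nonempty κ] {T : Finset (κ → ℝ)} (hT : T.Nonempty)
    (hbound : ∀ u ∈ T, ∀ i, |u i| ≤ 1) {ρ : ℝ}
    (hsep : (T : Set (κ → ℝ)).Pairwise fun u v => ρ ≤ meanSqDist u v) {m : ℕ} (hm : 0 < m)
    (hlog : 128 * Real.log #T ≤ m * ρ) :
    ∃ φ : Fin m → κ,
      (T : Set (κ → ℝ)).Pairwise fun u v => ρ / 2 ≤ meanSqDist (u ∘ φ) (v ∘ φ) := by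
  classical
  let bad (p : (κ → ℝ) × (κ → ℝ)) : Finset (Fin m → κ) :=
    {φ | meanSqDist (p.1 ∘ φ) (p.2 ∘ φ) < ρ / 2}
  have hbad : ∀ p ∈ T.offDiag,
      #(bad p) ≤ (Fintype.card κ : ℝ) ^ m * Real.exp (-(m * ρ / 64)) := fun p hp => by
    obtain ⟨hu, hv, hne⟩ := mem_offDiag.mp hp
    exact card_filter_meanSqDist_comp_lt_le (hbound _ hu) (hbound _ hv) (hsep hu hv hne) hm
  have hTpos : (0 : ℝ) < #T := mod_cast hT.card_pos
  have hpairs : (#T.offDiag : ℝ) < (#T : ℝ) ^ 2 := by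
    rw [offDiag_card, Nat.cast_sub (Nat.le_mul_self _)]
    push_cast
    linarith
  have hexp : (#T : ℝ) ^ 2 ≤ Real.exp (m * ρ / 64) := by
    rw [← Real.log_le_iff_le_exp (by positivity), Real.log_pow]
    push_cast
    linarith
  have hunion : #(T.offDiag.biUnion bad) < #(univ : Finset (Fin m → κ)) := by
    rw [← Nat.cast_lt (α := ℝ)]
    calc (#(T.offDiag.biUnion bad) : ℝ) ≤ ∑ p ∈ T.offDiag, (#(bad p) : ℝ) :=
          mod_cast card_biUnion_le
      _ ≤ #T.offDiag * ((Fintype.card κ : ℝ) ^ m * Real.exp (-(m * ρ / 64))) := by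
          rw [← nsmul_eq_mul]
          exact sum_le_card_nsmul _ _ _ hbad
      _ < Real.exp (m * ρ / 64) * ((Fintype.card κ : ℝ) ^ m * Real.exp (-(m * ρ / 64))) := by
          gcongr
          exact hpairs.trans_le hexp
      _ = #(univ : Finset (Fin m → κ)) := by
          rw [mul_left_comm, ← Real.exp_add, add_neg_cancel, Real.exp_zero, mul_one, card_univ,
            Fintype.card_fun, Fintype.card_fin, Nat.cast_pow]
  obtain ⟨φ, -, hφ⟩ := exists_mem_notMem_of_card_lt_card hunion
  refine ⟨φ, fun u hu v hv hne => ?_⟩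
  by_contra! hlt
  exact hφ (mem_biUnion.mpr ⟨(u, v), mem_offDiag.mpr ⟨hu, hv, hne⟩, by simpa [bad] using hlt⟩)

lemma log_le_of_sqrt_mul_pow_le_exp {n ε : ℝ} (hn : 0 < n) (hε : 0 < ε) {V : ℕ}
    (h : √n * ((ε / 30) ^ 3) ^ V ≤ Real.exp (Real.log n / 4)) : Real.log n ≤ 360 * V / ε := by
  have hlog := Real.log_le_log (by positivity) h
  rw [Real.log_exp, Real.log_mul (by positivity) (by positivity), Real.log_pow,
    Real.log_sqrt hn.le, Real.log_pow] at hlog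
  have hinv : -Real.log (ε / 30) ≤ 30 / ε := by
    rw [← Real.log_inv, inv_div]
    exact Real.log_le_self (by positivity)
  calc Real.log n ≤ 12 * (V * -Real.log (ε / 30)) := by
        push_cast at hlog
        linarith
    _ ≤ 12 * (V * (30 / ε)) := by gcongr
    _ = 360 * V / ε := by ring

lemma exists_sample_size {l ε : ℝ} (hl : 1 / 2 ≤ l) (hε : 0 < ε) (hε2 : ε ≤ 2) :
    ∃ m : ℕ, 0 < m ∧ 128 * l ≤ m * ε ^ 2 ∧ 42 / ε * (ε / 30) ^ 3 * m ≤ l / 4 := by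
  refine ⟨⌈128 * l / ε ^ 2⌉₊, Nat.ceil_pos.mpr (by positivity), ?_, ?_⟩
  · rw [← div_le_iff₀ (by positivity)]
    exact Nat.le_ceil _
  have hceil := Nat.ceil_lt_add_one (a := 128 * l / ε ^ 2) (by positivity)
  have hone : 1 ≤ 8 * l / ε ^ 2 := by
    rw [le_div_iff₀ (by positivity)]
    nlinarith
  calc 42 / ε * (ε / 30) ^ 3 * ⌈128 * l / ε ^ 2⌉₊
      ≤ 42 / ε * (ε / 30) ^ 3 * (128 * l / ε ^ 2 + 8 * l / ε ^ 2) := by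
        gcongr
        linarith
    _ = 42 * 136 / 27000 * l := by
        field_simp
        ring
    _ ≤ l / 4 := by linarith

/-- Sampling about `log #T / ε ^ 2` coordinates at random preserves the separation, so the ambient
number of coordinates can be traded for `log #T` itself. -/
lemma log_card_le_of_separated [Fintype κ] {T : Finset (κ → ℝ)}
    (hbound : ∀ u ∈ T, ∀ i, |u i| ≤ 1) {ε : ℝ} (hε : 0 < ε) (hε2 : ε ≤ 2)
    (hsep : (T : Set (κ → ℝ)).Pairwise fun u v => ε ^ 2 ≤ meanSqDist u v)
    {V : ℕ} (hV : FatDimLE (T : Set (κ → ℝ)) (ε / 40) V) :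
    Real.log #T ≤ 360 * V / ε := by
  obtain hsmall | hlarge := le_or_gt #T 1
  · exact (Real.log_nonpos (by positivity) (mod_cast hsmall)).trans (by positivity)
  have hT : T.Nonempty := card_pos.mp (by lia)
  have hTpos : (0 : ℝ) < #T := mod_cast hT.card_pos
  obtain hκ | hκ := isEmpty_or_nonempty κ
  · exact absurd (card_le_one_of_subsingleton T) hlarge.not_ge
  have hlog : 1 / 2 ≤ Real.log #T := by
    have hlog2 := Real.log_le_log (by norm_num) (by exact_mod_cast hlarge : (2 : ℝ) ≤ #T)
    linarith [Real.log_two_gt_d9]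
  obtain ⟨m, hm, hsample, hexp⟩ := exists_sample_size hlog hε hε2
  obtain ⟨φ, hφ⟩ := exists_separating_sample hT hbound hsep hm hsample
  refine log_le_of_sqrt_mul_pow_le_exp hTpos hε ?_
  have hy1 : (ε / 30) ^ 3 ≤ 1 := pow_le_one₀ (by positivity) (by linarith)
  have hcount := sqrt_card_mul_pow_le_exp hε hε2 (fun u hu j => hbound u hu (φ j)) hφ
    (hV.image_comp φ) (by positivity) hy1
  rw [Fintype.card_fin] at hcount
  exact hcount.trans (Real.exp_le_exp.mpr hexp)

lemma exists_separated_net [Fintype κ] (F : Finset (κ → ℝ)) {ρ : ℝ} (hρ : 0 ≤ ρ) :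
    ∃ N ⊆ F, (N : Set (κ → ℝ)).Pairwise (fun u v => ρ ≤ meanSqDist u v) ∧
      ∀ u ∈ F, ∃ v ∈ N, meanSqDist u v ≤ ρ := by
  let close : SetRel (κ → ℝ) (κ → ℝ) := {p | meanSqDist p.1 p.2 ≤ ρ}
  have : close.IsRefl := ⟨fun u => by simpa [close, meanSqDist] using hρ⟩
  have : close.IsSymm := ⟨fun u v h => by simpa [close, meanSqDist, sub_sq_comm] using h⟩
  have hfinite : {N : Set (κ → ℝ) | N ⊆ F ∧ close.IsSeparated N}.Finite :=
    F.finite_toSet.finite_subsets.subset fun _ hN => hN.1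
  obtain ⟨N, hN⟩ := hfinite.exists_maximal ⟨∅, Set.empty_subset _, .empty⟩
  lift N to Finset (κ → ℝ) using F.finite_toSet.subset hN.1.1
  exact ⟨N, coe_subset.mp hN.1.1, hN.1.2.mono' fun _ _ h => (not_le.mp h).le,
    fun u hu => SetRel.IsCover.of_maximal_isSeparated hN (mem_coe.mpr hu)⟩

lemma exists_approx_of_fatDimLE [Fintype ι] [Fintype κ] {g : ι → κ → ℝ}
    (hg : ∀ b i, |g b i| ≤ 1) {ε : ℝ} (hε : 0 < ε) (hε2 : ε ≤ 2) {V : ℕ}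
    (hV : FatDimLE (Set.range g) (ε / 40) V) :
    ∃ p : ι → κ → ℝ, (∀ b, meanSqDist (g b) (p b) ≤ ε ^ 2) ∧
      Real.log #(univ.image p) ≤ 360 * V / ε := by
  obtain ⟨N, hNg, hsep, hcover⟩ := exists_separated_net (univ.image g) (sq_nonneg ε)
  have hrange : (N : Set (κ → ℝ)) ⊆ Set.range g := by simpa using coe_subset.mpr hNg
  have hbound : ∀ u ∈ N, ∀ i, |u i| ≤ 1 := fun u hu => by
    obtain ⟨b, rfl⟩ := hrange hu
    exact hg b
  choose p hpN hp using fun b => hcover (g b) (mem_image_of_mem g (mem_univ b))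
  refine ⟨p, hp, ?_⟩
  obtain hempty | hne := (univ.image p).eq_empty_or_nonempty
  · simp only [hempty, card_empty, Nat.cast_zero, Real.log_zero]
    positivity
  have hcard : #(univ.image p) ≤ #N := card_le_card (image_subset_iff.mpr fun b _ => hpN b)
  have hpos : (0 : ℝ) < #(univ.image p) := mod_cast hne.card_pos
  exact (Real.log_le_log hpos (mod_cast hcard)).trans
    (log_card_le_of_separated hbound hε hε2 hsep (hV.mono hrange le_rfl))

section SignCorrelation

variable [Fintype κ] [DecidableEq κ]

/-- The expectation, over uniformly random signs `b`, of the normalised correlation between `b` and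
the vector `z b` selected for it; the supremum over selections from a class is the Rademacher
average of the class. -/
def signCorr (z : (κ → Bool) → κ → ℝ) : ℝ := 𝔼 b, 𝔼 i, bval (b i) * z b i

lemma bval_sq (b : Bool) : bval b ^ 2 = 1 := by
  cases b <;> simp [bval]

lemma signCorr_add (z w : (κ → Bool) → κ → ℝ) :
    signCorr (z + w) = signCorr z + signCorr w := by
  simp only [signCorr, Pi.add_apply, mul_add, expect_add_distrib]

lemma signCorr_const (v : κ → ℝ) : signCorr (fun _ => v) = 0 := by
  have hbval_not (b : Bool) : bval (!b) = -bval b := by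
    cases b <;> simp [bval]
  have hflip : signCorr (fun _ => v) = -signCorr (fun _ => v) := by
    rw [signCorr, ← expect_neg_distrib]
    refine Fintype.expect_equiv (Equiv.piCongrRight fun _ => Equiv.boolNot) _ _ fun b => ?_
    simp [← expect_neg_distrib, hbval_not]
  linarith

lemma signCorr_le_of_expect_sq_le {z : (κ → Bool) → κ → ℝ} {ε : ℝ} (hε : 0 ≤ ε)
    (hz : ∀ b, 𝔼 i, z b i ^ 2 ≤ ε ^ 2) : signCorr z ≤ ε := by
  refine expect_le univ_nonempty fun b _ => ?_
  have hone : 𝔼 i, bval (b i) ^ 2 ≤ 1 := by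
    simp only [bval_sq]
    obtain hκ | hκ := isEmpty_or_nonempty κ
    · simp
    · simp
  refine (abs_le_of_sq_le_sq' ?_ hε).2
  calc (𝔼 i, bval (b i) * z b i) ^ 2 ≤ (𝔼 i, bval (b i) ^ 2) * 𝔼 i, z b i ^ 2 :=
        expect_mul_sq_le_sq_mul_sq _ _ _
    _ ≤ 1 * ε ^ 2 := by
        exact mul_le_mul hone (hz b) (expect_nonneg fun i _ => sq_nonneg _) zero_le_one
    _ = ε ^ 2 := one_mul _

lemma expect_exp_sum_bval_mul_le (z : κ → ℝ) :
    𝔼 b : κ → Bool, Real.exp (∑ i, bval (b i) * z i) ≤ Real.exp ((∑ i, z i ^ 2) / 2) :=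
  calc 𝔼 b : κ → Bool, Real.exp (∑ i, bval (b i) * z i)
      = (∏ i, ∑ c : Bool, Real.exp (bval c * z i)) / 2 ^ Fintype.card κ := by
        rw [Fintype.expect_eq_sum_div_card, Fintype.prod_sum]
        simp only [Real.exp_sum, Fintype.card_fun, Fintype.card_bool, Nat.cast_pow,
          Nat.cast_ofNat]
    _ = ∏ i, Real.cosh (z i) := by
        rw [← card_univ, ← prod_const, ← prod_div_distrib]
        refine prod_congr rfl fun i _ => ?_
        rw [Fintype.sum_bool, Real.cosh_eq]
        simp [bval]
    _ ≤ ∏ i, Real.exp (z i ^ 2 / 2) :=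
        prod_le_prod (fun i _ => (Real.cosh_pos _).le) fun i _ => Real.cosh_le_exp_half_sq _
    _ = Real.exp ((∑ i, z i ^ 2) / 2) := by
        rw [← Real.exp_sum, sum_div]

lemma exp_expect_le [Fintype ι] [Nonempty ι] (f : ι → ℝ) :
    Real.exp (𝔼 b, f b) ≤ 𝔼 b, Real.exp (f b) := by
  have hweights : ∑ _b : ι, (Fintype.card ι : ℝ)⁻¹ = 1 := by simp
  have hjensen := convexOn_exp.map_sum_le (t := univ) (p := f)
    (fun _ _ => by positivity) hweights fun _ _ => Set.mem_univ _
  simpa only [Fintype.expect_eq_sum_div_card, smul_eq_mul, inv_mul_eq_div, ← sum_div] using hjensen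

lemma expect_exp_selection_le {z : (κ → Bool) → κ → ℝ} {Q : ℝ} (hQ : ∀ b, ∑ i, z b i ^ 2 ≤ Q) :
    𝔼 b, Real.exp (∑ i, bval (b i) * z b i) ≤ #(univ.image z) * Real.exp (Q / 2) :=
  calc 𝔼 b, Real.exp (∑ i, bval (b i) * z b i)
      ≤ 𝔼 b : κ → Bool, ∑ v ∈ univ.image z, Real.exp (∑ i, bval (b i) * v i) :=
        expect_le_expect fun b _ =>
          single_le_sum (f := fun v => Real.exp (∑ i, bval (b i) * v i))
            (fun _ _ => (Real.exp_pos _).le) (mem_image_of_mem z (mem_univ b))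
    _ = ∑ v ∈ univ.image z, 𝔼 b : κ → Bool, Real.exp (∑ i, bval (b i) * v i) :=
        expect_sum_comm _ _ _
    _ ≤ ∑ v ∈ univ.image z, Real.exp (Q / 2) := sum_le_sum fun v hv => by
        obtain ⟨b, -, rfl⟩ := mem_image.mp hv
        refine (expect_exp_sum_bval_mul_le _).trans (Real.exp_le_exp.mpr ?_)
        linarith [hQ b]
    _ = #(univ.image z) * Real.exp (Q / 2) := by rw [sum_const, nsmul_eq_mul]

/-- Massart's finite class lemma, before optimising over the parameter `c`. -/
lemma signCorr_le_log_card_div_add [Nonempty κ] {z : (κ → Bool) → κ → ℝ} {Q c : ℝ} (hc : 0 < c)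
    (hQ : ∀ b, 𝔼 i, z b i ^ 2 ≤ Q) :
    signCorr z ≤ Real.log #(univ.image z) / (c * Fintype.card κ) + c * Q / 2 := by
  have hsq (b : κ → Bool) : ∑ i, (c • z) b i ^ 2 ≤ c ^ 2 * (Fintype.card κ * Q) := by
    simp only [Pi.smul_apply, smul_eq_mul, mul_pow, ← mul_sum, ← Fintype.card_mul_expect]
    gcongr
    exact hQ b
  have hcorr : 𝔼 b, ∑ i, bval (b i) * (c • z) b i = c * Fintype.card κ * signCorr z := by
    rw [signCorr, mul_expect]
    refine expect_congr rfl fun b _ => ?_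
    rw [mul_assoc, Fintype.card_mul_expect, mul_sum]
    exact sum_congr rfl fun i _ => mul_left_comm _ _ _
  have hcard : #(univ.image (c • z)) = #(univ.image z) := by
    rw [show c • z = (c • ·) ∘ z from rfl, ← image_image,
      card_image_of_injective _ (smul_right_injective _ hc.ne')]
  have hpos : (0 : ℝ) < #(univ.image z) := mod_cast (univ_nonempty.image z).card_pos
  have hexp := (exp_expect_le _).trans (expect_exp_selection_le hsq)
  rw [hcorr, hcard, ← Real.le_log_iff_exp_le (by positivity),
    Real.log_mul hpos.ne' (Real.exp_ne_zero _), Real.log_exp] at hexp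
  calc signCorr z ≤ (Real.log #(univ.image z) + c ^ 2 * (Fintype.card κ * Q) / 2) /
        (c * Fintype.card κ) := by
        rwa [le_div_iff₀' (by positivity)]
    _ = Real.log #(univ.image z) / (c * Fintype.card κ) + c * Q / 2 := by
        field_simp

end SignCorrelation

section Chaining

lemma meanSqDist_le_two_mul_add [Fintype κ] (u v w : κ → ℝ) :
    meanSqDist u v ≤ 2 * (meanSqDist w u + meanSqDist w v) := by
  simp only [meanSqDist, ← expect_add_distrib, mul_expect]
  refine expect_le_expect fun i _ => ?_
  linarith [sq_nonneg ((w i - u i) + (w i - v i))]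

lemma log_card_image_sub_le [Fintype ι] [Nonempty ι] [Fintype κ] (p q : ι → κ → ℝ) :
    Real.log #(univ.image (p - q)) ≤ Real.log #(univ.image p) + Real.log #(univ.image q) := by
  have hsub : univ.image (p - q) ⊆ image₂ (· - ·) (univ.image p) (univ.image q) :=
    image_subset_iff.mpr fun b _ =>
      mem_image₂_of_mem (mem_image_of_mem p (mem_univ b)) (mem_image_of_mem q (mem_univ b))
  have hcard : #(univ.image (p - q)) ≤ #(univ.image p) * #(univ.image q) :=
    (card_le_card hsub).trans (card_image₂_le _ _ _)
  have hpos (f : ι → κ → ℝ) : (0 : ℝ) < #(univ.image f) :=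
    mod_cast (univ_nonempty.image f).card_pos
  rw [← Real.log_mul (hpos p).ne' (hpos q).ne']
  exact Real.log_le_log (hpos _) (mod_cast hcard)

variable [Fintype κ] [DecidableEq κ] [Nonempty κ] {g : (κ → Bool) → κ → ℝ} {V : ℕ}

/-- The choice `c = θ / τ ^ 3` in Massart's lemma balances the entropy `V / τ ^ 2` of a link of the
chain against its squared length `τ ^ 4`. -/
lemma signCorr_sub_le {p q : (κ → Bool) → κ → ℝ} {τ θ : ℝ} (hτ : 0 < τ) (hθ : 0 < θ)
    (hp : ∀ b, meanSqDist (g b) (p b) ≤ (2 * τ ^ 2) ^ 2)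
    (hq : ∀ b, meanSqDist (g b) (q b) ≤ (2 * (2 * τ) ^ 2) ^ 2)
    (hpcard : Real.log #(univ.image p) ≤ 180 * V / τ ^ 2)
    (hqcard : Real.log #(univ.image q) ≤ 180 * V / (2 * τ) ^ 2) :
    signCorr (p - q) ≤ (225 * V / (θ * Fintype.card κ) + 68 * θ) * τ := by
  have hsq (b : κ → Bool) : 𝔼 i, (p - q) b i ^ 2 ≤ 136 * τ ^ 4 :=
    calc 𝔼 i, (p - q) b i ^ 2 = meanSqDist (p b) (q b) := rfl
      _ ≤ 2 * (meanSqDist (g b) (p b) + meanSqDist (g b) (q b)) := meanSqDist_le_two_mul_add _ _ _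
      _ ≤ 2 * ((2 * τ ^ 2) ^ 2 + (2 * (2 * τ) ^ 2) ^ 2) := by gcongr <;> [exact hp b; exact hq b]
      _ = 136 * τ ^ 4 := by ring
  have hcard : Real.log #(univ.image (p - q)) ≤ 225 * V / τ ^ 2 :=
    calc Real.log #(univ.image (p - q)) ≤ 180 * V / τ ^ 2 + 180 * V / (2 * τ) ^ 2 :=
          (log_card_image_sub_le p q).trans (add_le_add hpcard hqcard)
      _ = 225 * V / τ ^ 2 := by field_simp; ring
  calc signCorr (p - q)
      ≤ Real.log #(univ.image (p - q)) / (θ / τ ^ 3 * Fintype.card κ) +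
          θ / τ ^ 3 * (136 * τ ^ 4) / 2 := signCorr_le_log_card_div_add (by positivity) hsq
    _ ≤ 225 * V / τ ^ 2 / (θ / τ ^ 3 * Fintype.card κ) + θ / τ ^ 3 * (136 * τ ^ 4) / 2 := by
        gcongr
    _ = (225 * V / (θ * Fintype.card κ) + 68 * θ) * τ := by
        field_simp; ring

lemma exists_chain (hg : ∀ b i, |g b i| ≤ 1) {θ : ℝ} (hθ : 0 < θ) (k : ℕ) {τ : ℝ}
    (hτk : τ = (1 / 2) ^ k) (hV : FatDimLE (Set.range g) (2 * τ ^ 2 / 40) V) :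
    ∃ p : (κ → Bool) → κ → ℝ, (∀ b, meanSqDist (g b) (p b) ≤ (2 * τ ^ 2) ^ 2) ∧
      Real.log #(univ.image p) ≤ 180 * V / τ ^ 2 ∧
      signCorr p ≤ (225 * V / (θ * Fintype.card κ) + 68 * θ) * (1 - τ) := by
  induction k generalizing τ with
  | zero =>
    obtain rfl : τ = 1 := by rw [hτk, pow_zero]
    refine ⟨fun _ => 0, fun b => expect_le univ_nonempty fun i _ => ?_, ?_, ?_⟩
    · have hsq : g b i ^ 2 ≤ 1 := (sq_le_one_iff_abs_le_one _).mpr (hg b i)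
      simp only [Pi.zero_apply, sub_zero]
      linarith
    · rw [image_const univ_nonempty, card_singleton, Nat.cast_one, Real.log_one]
      positivity
    · rw [signCorr_const, sub_self, mul_zero]
  | succ k ih =>
    have hτ : 0 < τ := hτk ▸ by positivity
    have hτ1 : τ ≤ 1 := hτk ▸ pow_le_one₀ (by norm_num) (by norm_num)
    obtain ⟨q, hq, hqcard, hqcorr⟩ := ih (τ := 2 * τ) (by rw [hτk, pow_succ]; ring)
      (hV.mono subset_rfl (by gcongr; linarith))
    obtain ⟨p, hp, hpcard⟩ :=
      exists_approx_of_fatDimLE hg (by positivity) (by nlinarith : 2 * τ ^ 2 ≤ 2) hV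
    have hpcard' : Real.log #(univ.image p) ≤ 180 * V / τ ^ 2 :=
      hpcard.trans_eq (by field_simp; ring)
    refine ⟨p, hp, hpcard', ?_⟩
    calc signCorr p = signCorr q + signCorr (p - q) := by rw [← signCorr_add, add_sub_cancel]
      _ ≤ (225 * V / (θ * Fintype.card κ) + 68 * θ) * (1 - 2 * τ) +
          (225 * V / (θ * Fintype.card κ) + 68 * θ) * τ :=
          add_le_add hqcorr (signCorr_sub_le hτ hθ hp hq hpcard' hqcard)
      _ = (225 * V / (θ * Fintype.card κ) + 68 * θ) * (1 - τ) := by ring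

lemma signCorr_le_of_fatDimLE (hg : ∀ b i, |g b i| ≤ 1) {α θ : ℝ} (hα : 0 < α) (hα1 : α ≤ 1)
    (hθ : 0 < θ) (hV : FatDimLE (Set.range g) (α / 320) V) :
    signCorr g ≤ α / 2 + 225 * V / (θ * Fintype.card κ) + 68 * θ := by
  obtain ⟨k, hlt, hle⟩ := exists_nat_pow_near_of_lt_one (x := α / 4) (y := (1 : ℝ) / 4)
    (by positivity) (by linarith) (by norm_num) (by norm_num)
  obtain ⟨τ, hτk⟩ : ∃ τ : ℝ, τ = (1 / 2) ^ (k + 1) := ⟨_, rfl⟩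
  have hτ : 0 < τ := hτk ▸ by positivity
  have hτ_sq : τ ^ 2 = (1 / 4) ^ k / 4 := by
    rw [hτk, ← pow_mul, mul_comm, pow_mul, pow_succ]
    norm_num
    ring
  have hτ_sq_lt : τ ^ 2 < α / 4 := by
    rw [hτ_sq]
    rw [pow_succ] at hlt
    linarith
  obtain ⟨p, hp, -, hpcorr⟩ := exists_chain hg hθ (k + 1) hτk
    (hV.mono subset_rfl (by linarith))
  have hrest : signCorr (g - p) ≤ 2 * τ ^ 2 := signCorr_le_of_expect_sq_le (by positivity) hp
  have hchain : signCorr p ≤ 225 * V / (θ * Fintype.card κ) + 68 * θ :=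
    hpcorr.trans (mul_le_of_le_one_right (by positivity) (by linarith))
  calc signCorr g = signCorr (g - p) + signCorr p := by rw [← signCorr_add, sub_add_cancel]
    _ ≤ α / 2 + 225 * V / (θ * Fintype.card κ) + 68 * θ := by linarith

lemma card_le_of_le_signCorr (hg : ∀ b i, |g b i| ≤ 1) {α : ℝ} (hα : 0 < α)
    (hV : FatDimLE (Set.range g) (α / 320) V) (hcorr : α ≤ signCorr g) :
    (Fintype.card κ : ℝ) ≤ 244800 * V / α ^ 2 := by
  have hα1 : α ≤ 1 := hcorr.trans <| signCorr_le_of_expect_sq_le zero_le_one fun b =>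
    expect_le univ_nonempty fun i _ => by
      simpa only [one_pow] using (sq_le_one_iff_abs_le_one _).mpr (hg b i)
  have hbound := signCorr_le_of_fatDimLE hg hα hα1 (θ := α / 272) (by positivity) hV
  have hquarter : α / 4 ≤ 225 * V / (α / 272 * Fintype.card κ) := by linarith
  rw [le_div_iff₀ (by positivity)] at hquarter ⊢
  linarith

end Chaining

section ConvexHull

variable {X : Type*}

lemma FatShatters.of_truncAt {G : Set (X → ℝ)} {γ α : ℝ} (hα : 0 < α) {d : ℕ} {x : Fin d → X}
    {r : Fin d → ℝ} (h : FatShatters (truncAt γ '' G) α x r) : FatShatters G α x r := by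
  have hlow (i : Fin d) : -γ ≤ r i - α := by
    obtain ⟨_, ⟨v, -, rfl⟩, hv⟩ := h fun _ => false
    exact (le_max_left _ _).trans ((hv i).2 rfl)
  have hhigh (i : Fin d) : r i + α ≤ γ := by
    obtain ⟨_, ⟨v, -, rfl⟩, hv⟩ := h fun _ => true
    obtain hneg | hmin := le_max_iff.mp ((hv i).1 rfl)
    · linarith [hlow i]
    · exact hmin.trans (min_le_left _ _)
  intro b
  obtain ⟨_, ⟨v, hvG, rfl⟩, hv⟩ := h b
  refine ⟨v, hvG, fun i => ⟨fun hb => ?_, fun hb => ?_⟩⟩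
  · obtain hneg | hmin := le_max_iff.mp ((hv i).1 hb)
    · linarith [hlow i]
    · exact hmin.trans (min_le_right _ _)
  · obtain hγ | hvx := min_le_iff.mp ((max_le_iff.mp ((hv i).2 hb)).2)
    · linarith [hhigh i]
    · exact hvx

lemma le_bval_mul_of_fatShatters {b : Bool} {r α y : ℝ}
    (hy : (b = true → r + α ≤ y) ∧ (b = false → y ≤ r - α)) :
    bval b * r + α ≤ bval b * y := by
  cases b
  · have hlow := hy.2 rfl
    simp only [bval, Bool.false_eq_true, if_false]
    linarith
  · simpa [bval] using hy.1 rfl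

/-- A linear functional on the hull is maximised at a generator, so passing from the hull to its
generators preserves correlations with signs, though not the shattering itself. -/
lemma exists_le_signCorr_of_fatShatters_convexHull {H : Set (X → ℝ)} {α : ℝ} {k : ℕ} [NeZero k]
    {x : Fin k → X} {r : Fin k → ℝ} (hr : FatShatters (convexHull ℝ H) α x r) :
    ∃ h : (Fin k → Bool) → X → ℝ, (∀ b, h b ∈ H) ∧ α ≤ signCorr fun b => h b ∘ x := by
  let corrAt (b : Fin k → Bool) : (X → ℝ) →ₗ[ℝ] ℝ := ∑ i, bval (b i) • LinearMap.proj (x i)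
  have hcorrAt (b : Fin k → Bool) (v : X → ℝ) : corrAt b v = ∑ i, bval (b i) * v (x i) := by
    simp [corrAt]
  choose v hv_mem hv using hr
  choose h hH hle using fun b =>
    ((corrAt b).convexOn (convex_convexHull ℝ H)).exists_ge_of_mem_convexHull
      (subset_convexHull ℝ H) (hv_mem b)
  refine ⟨h, hH, ?_⟩
  calc α = signCorr (fun _ => r) + 𝔼 _b : Fin k → Bool, 𝔼 _i : Fin k, α := by
        rw [signCorr_const, Fintype.expect_const, Fintype.expect_const, zero_add]
    _ = 𝔼 b : Fin k → Bool, 𝔼 i, (bval (b i) * r i + α) := by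
        simp only [signCorr, expect_add_distrib]
    _ ≤ 𝔼 b : Fin k → Bool, 𝔼 i, bval (b i) * v b (x i) :=
        expect_le_expect fun b _ => expect_le_expect fun i _ => le_bval_mul_of_fatShatters (hv b i)
    _ ≤ signCorr fun b => h b ∘ x := expect_le_expect fun b _ => by
        simp only [Fintype.expect_eq_sum_div_card, Function.comp_apply, ← hcorrAt]
        exact div_le_div_of_nonneg_right (hle b) (Nat.cast_nonneg _)

lemma FatShatters.card_le_of_convexHull {H : Set (X → ℝ)} {α : ℝ} {V : ℕ}
    (hH : ∀ h ∈ H, ∀ x, |h x| ≤ 1) (hα : 0 < α) (hV : FatDimLE H (α / 320) V) {k : ℕ}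
    {x : Fin k → X} {r : Fin k → ℝ} (hr : FatShatters (convexHull ℝ H) α x r) :
    (k : ℝ) ≤ 244800 * V / α ^ 2 := by
  obtain rfl | hk := eq_or_ne k 0
  · rw [Nat.cast_zero]
    positivity
  have : NeZero k := ⟨hk⟩
  obtain ⟨h, h_mem, hcorr⟩ := exists_le_signCorr_of_fatShatters_convexHull hr
  have hrange : Set.range (fun b => h b ∘ x) ⊆ (· ∘ x) '' H := by
    rintro _ ⟨b, rfl⟩
    exact ⟨h b, h_mem b, rfl⟩
  simpa only [Fintype.card_fin] using card_le_of_le_signCorr (fun b i => hH _ (h_mem b) (x i)) hα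
    ((hV.image_comp x).mono hrange le_rfl) hcorr

end ConvexHull

end Agb

/-- fat-shattering dimension of the truncated convex hull.
There are universal constants `C' ≥ 1` and `0 < c' ≤ 1` such that for every class
`H ⊆ [−1,1]^X` and every `γ, α > 0`, `fat_α(Conv(H)_{⌈γ⌉}) ≤ C'·fat_{c'α}(H)/α²`:
every point set `α`-fat-shattered by the truncated convex hull has size at most
`C'·fat_{c'α}(H)/α²`. -/
theorem statement7 :
    ∃ C' c' : ℝ, 1 ≤ C' ∧ 0 < c' ∧ c' ≤ 1 ∧
    ∀ (X : Type) (H : Set (X → ℝ)) (γ α : ℝ),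
      (∀ h ∈ H, ∀ x, |h x| ≤ 1) → 0 < γ → 0 < α →
      ∀ dH : ℕ, IsFatDim H (c' * α) dH →
      ∀ (k : ℕ) (x : Fin k → X) (r : Fin k → ℝ),
        FatShatters (truncAt γ '' (convexHull ℝ H)) α x r →
        (k : ℝ) ≤ C' * dH / α ^ 2 := by
  refine ⟨244800, 1 / 320, by norm_num, by norm_num, by norm_num, ?_⟩
  intro X H γ α hH _ hα dH hdH k x r hr
  have hV : FatDimLE H (α / 320) dH := fun q y s hy =>
    hdH.2 ⟨y, s, by rwa [one_div_mul_eq_div]⟩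
  exact (hr.of_truncAt hα).card_le_of_convexHull hH hα hV
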